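/- If the time-varying graph {G_t} is jointly (δ,T)-connected for some δ, T > 0, then there exists δ' > 0 such that for any s ≥ 0 and any two solutions x and x̃ of the consensus dynamics x'(t) = −L(t)x(t): if a_ij(t)(x_j(t) − x_i(t)) = a_ij(t)(x̃_j(t) − x̃_i(t)) for all i, j and almost every t ∈ [s, s+δ'], then x(s) − x_ave(s)·1 = x̃(s) − x̃_ave(s)·1, i.e., the edge signals over a window of length δ' determine the centered node states. -/

import Mathlib

/-!
The window length `δ' = T` works. The right-hand side of the dynamics is
`(-L(t) v) i = ∑ j, a i j t * (v j - v i)`, so it depends on the state only through the edge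
signals. If these agree almost everywhere on `[s, s + T]`, both solutions have the same increments
there, and `z = x - y` is constant on the window. Then `a i j t * (z j - z i) = 0` for almost
every `t` in the window, with `z` evaluated at `s`; integrating gives
`(∫ a i j) * (z j - z i) = 0`. Hence `z` takes equal values at the ends of every edge whose weight
has integral at least `δ > 0`, and joint connectivity makes `z` a multiple of the all-ones vector,
which centering removes.
-/

open MeasureTheory Finset Matrix

/-- The time-varying graph Laplacian built from the weight functions `a`. -/
noncomputable def lap {N : ℕ} (a : Fin N → Fin N → ℝ → ℝ) (t : ℝ) :
    Matrix (Fin N) (Fin N) ℝ :=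
  Matrix.of fun i j =>
    if i = j then ∑ k ∈ Finset.univ.erase i, a i k t else -(a i j t)

/-- The time-varying graph is jointly `(δ,T)`-connected. -/
def JointlyConnected {N : ℕ} (a : Fin N → Fin N → ℝ → ℝ) (δ T : ℝ) : Prop :=
  ∀ s : ℝ, 0 ≤ s →
    (SimpleGraph.fromRel fun i j : Fin N => δ ≤ ∫ t in s..s + T, a i j t).Connected

/-- A (locally absolutely continuous) solution of `x'(t) = -L(t) x(t)` on `[t₀,∞)`,
in integral form. -/
def IsSolution {N : ℕ} (a : Fin N → Fin N → ℝ → ℝ) (t₀ : ℝ)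
    (x : ℝ → Fin N → ℝ) : Prop :=
  ContinuousOn x (Set.Ici t₀) ∧
    ∀ t, t₀ ≤ t → x t = x t₀ + ∫ u in t₀..t, (-(lap a u)).mulVec (x u)

/-- The average of the entries of a vector. -/
noncomputable def xave {N : ℕ} (v : Fin N → ℝ) : ℝ := (∑ i, v i) / N

lemma neg_lap_mulVec {N : ℕ} (a : Fin N → Fin N → ℝ → ℝ) (t : ℝ) (v : Fin N → ℝ) (i : Fin N) :
    (-(lap a t)).mulVec v i = ∑ j, a i j t * (v j - v i) := by
  have h1 : (lap a t).mulVec v i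
      = (∑ k ∈ Finset.univ.erase i, a i k t) * v i
        + ∑ j ∈ Finset.univ.erase i, -(a i j t) * v j := by
    simp only [Matrix.mulVec, dotProduct, lap, Matrix.of_apply]
    rw [← Finset.add_sum_erase _ _ (Finset.mem_univ i), if_pos rfl]
    congr 1
    refine Finset.sum_congr rfl fun j hj => ?_
    rw [if_neg (Finset.ne_of_mem_erase hj).symm]
  rw [Matrix.neg_mulVec, Pi.neg_apply, h1, ← Finset.add_sum_erase _ _ (Finset.mem_univ i),
    Finset.sum_mul, ← Finset.sum_add_distrib, ← Finset.sum_neg_distrib, sub_self, mul_zero,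
    zero_add]
  exact Finset.sum_congr rfl fun j _ => by ring

lemma intervalIntegrable_weight {f : ℝ → ℝ} (hf : Measurable f) {A : ℝ}
    (hb : ∀ᵐ t ∂(volume : Measure ℝ), |f t| ≤ A) (u v : ℝ) :
    IntervalIntegrable f volume u v := by
  refine (intervalIntegrable_const (c := A)).mono_fun hf.aestronglyMeasurable ?_
  refine ae_restrict_of_ae (hb.mono fun t ht => ?_)
  exact ht.trans (le_abs_self A)

lemma intervalIntegrable_rhs {N : ℕ} {a : Fin N → Fin N → ℝ → ℝ}
    (hmeas : ∀ i j, Measurable (a i j)) {A : ℝ}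
    (hbd : ∀ i j, ∀ᵐ t ∂(volume : Measure ℝ), |a i j t| ≤ A)
    {t₀ : ℝ} {x : ℝ → Fin N → ℝ} (hx : ContinuousOn x (Set.Ici t₀))
    {u v : ℝ} (hu : t₀ ≤ u) (hv : t₀ ≤ v) :
    IntervalIntegrable (fun t => (-(lap a t)).mulVec (x t)) volume u v := by
  have hsub : Set.uIcc u v ⊆ Set.Ici t₀ := fun t ht => (le_inf hu hv).trans ht.1
  have hc : ∀ i, ContinuousOn (fun t => x t i) (Set.uIcc u v) := fun i =>
    (continuous_apply i).comp_continuousOn (hx.mono hsub)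
  rw [intervalIntegrable_iff]
  refine Integrable.of_eval fun i => ?_
  simp only [neg_lap_mulVec]
  refine integrable_finsetSum _ fun j _ => ?_
  exact (intervalIntegrable_iff.mp
    ((intervalIntegrable_weight (hmeas i j) (hbd i j) u v).mul_continuousOn ((hc j).sub (hc i))))

lemma IsSolution.eq_add_integral {N : ℕ} {a : Fin N → Fin N → ℝ → ℝ}
    (hmeas : ∀ i j, Measurable (a i j)) {A : ℝ}
    (hbd : ∀ i j, ∀ᵐ t ∂(volume : Measure ℝ), |a i j t| ≤ A)
    {t₀ : ℝ} {x : ℝ → Fin N → ℝ} (hx : IsSolution a t₀ x)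
    {s t : ℝ} (hs : t₀ ≤ s) (ht : s ≤ t) :
    x t = x s + ∫ u in s..t, (-(lap a u)).mulVec (x u) := by
  rw [hx.2 t (hs.trans ht), hx.2 s hs, add_assoc,
    intervalIntegral.integral_add_adjacent_intervals
      (intervalIntegrable_rhs hmeas hbd hx.1 le_rfl hs)
      (intervalIntegrable_rhs hmeas hbd hx.1 hs (hs.trans ht))]

/-- **Theorem 2 (identifiability form).** If the time-varying graph is jointly
`(δ,T)`-connected, then there exists `δ' > 0` such that for any `s ≥ 0` and any two
solutions `x` and `x̃` of the consensus dynamics: if the edge signals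
`a_ij(t)(x_j(t)-x_i(t))` agree for almost every `t ∈ [s, s+δ']`, then the centered
states at time `s` agree. -/
theorem edge_signals_determine_centered_state
    {N : ℕ} (hN : 2 ≤ N) (a : Fin N → Fin N → ℝ → ℝ)
    (hsymm : ∀ i j t, a i j t = a j i t)
    (hnonneg : ∀ i j (t : ℝ), 0 ≤ t → 0 ≤ a i j t)
    (hmeas : ∀ i j, Measurable (a i j))
    (A : ℝ) (hA : 0 < A)
    (hbd : ∀ i j, ∀ᵐ t ∂(volume : Measure ℝ), |a i j t| ≤ A)
    (δ T : ℝ) (hδ : 0 < δ) (hT : 0 < T)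
    (hconn : JointlyConnected a δ T) :
    ∃ δ' > (0 : ℝ), ∀ t₀ t₁ : ℝ, 0 ≤ t₀ → 0 ≤ t₁ →
      ∀ x y : ℝ → Fin N → ℝ, IsSolution a t₀ x → IsSolution a t₁ y →
      ∀ s : ℝ, t₀ ≤ s → t₁ ≤ s →
        (∀ᵐ t ∂(volume : Measure ℝ), t ∈ Set.Icc s (s + δ') →
          ∀ i j, a i j t * (x t j - x t i) = a i j t * (y t j - y t i)) →
        ∀ i, x s i - xave (x s) = y s i - xave (y s) := by
  refine ⟨T, hT, fun t₀ t₁ ht₀ _ x y hx hy s hs₀ hs₁ hae i => ?_⟩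
  have hincr : ∀ t ∈ Set.Icc s (s + T), x t - y t = x s - y s := by
    intro t ht
    have hint : ∫ u in s..t, (-(lap a u)).mulVec (x u)
        = ∫ u in s..t, (-(lap a u)).mulVec (y u) := by
      refine intervalIntegral.integral_congr_ae (hae.mono fun u hu hut => ?_)
      rw [Set.uIoc_of_le ht.1] at hut
      ext k
      rw [neg_lap_mulVec, neg_lap_mulVec]
      exact Finset.sum_congr rfl fun j _ => hu ⟨hut.1.le, hut.2.trans ht.2⟩ k j
    rw [hx.eq_add_integral hmeas hbd hs₀ ht.1, hy.eq_add_integral hmeas hbd hs₁ ht.1, hint]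
    abel
  have hzero : ∀ k l, (∫ t in s..s + T, a k l t) * ((x s - y s) l - (x s - y s) k) = 0 := by
    intro k l
    rw [← intervalIntegral.integral_mul_const]
    refine intervalIntegral.integral_zero_ae (hae.mono fun t ht hts => ?_)
    rw [Set.uIoc_of_le (by linarith)] at hts
    have hmem : t ∈ Set.Icc s (s + T) := ⟨hts.1.le, hts.2⟩
    rw [← hincr t hmem, Pi.sub_apply, Pi.sub_apply]
    linear_combination ht hmem k l
  have hedge : ∀ k l, δ ≤ ∫ t in s..s + T, a k l t → (x s - y s) k = (x s - y s) l := by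
    intro k l h
    rcases mul_eq_zero.mp (hzero k l) with h0 | h0 <;> linarith
  have hconst : ∀ k l, (x s - y s) k = (x s - y s) l := by
    intro k l
    obtain ⟨p⟩ := (hconn s (ht₀.trans hs₀)).preconnected k l
    induction p with
    | nil => rfl
    | cons hadj _ ih =>
      rw [SimpleGraph.fromRel_adj] at hadj
      exact (hadj.2.elim (hedge _ _) fun h => (hedge _ _ h).symm).trans ih
  have hx_eq : ∀ k, x s k = y s k + (x s - y s) i := fun k => by
    rw [hconst i k, Pi.sub_apply]
    ring
  have hN' : (N : ℝ) ≠ 0 := by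
    have : 0 < N := by omega
    positivity
  have hxave_eq : xave (x s) = xave (y s) + (x s - y s) i := by
    unfold xave
    rw [Finset.sum_congr rfl fun k _ => hx_eq k, Finset.sum_add_distrib, Finset.sum_const,
      Finset.card_univ, Fintype.card_fin, nsmul_eq_mul]
    field_simp
  rw [hxave_eq, Pi.sub_apply]
  ring
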